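/- arXiv:2406.02375 — 2 statements merged into one kernel-verified Lean document; each statement's English description precedes it below -/
import Mathlib

section
/- Let A ⊆ B be a strictly separable ring extension. Then the left global dimensions of A and B are equal. -/
/-!
Statement 2: A strictly separable ring extension `A ⊆ B` has equal left global
dimensions: the left global dimension of `A` equals the left global dimension of `B`.

-/

universe u

open TensorProduct

/-- `pdLE R n M` means that the left `R`-module `M` has projective dimension `≤ n`:
for `n = 0` this says that `M` is projective, and for `n+1` that `M` admits an
epimorphism from a projective module whose kernel has projective dimension `≤ n`. -/
def pdLE (R : Type u) [Ring R] : ℕ → (M : Type u) → [AddCommGroup M] → [Module R M] → Prop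
  | 0, M, _, _ => Module.Projective R M
  | n + 1, M, _, _ => ∃ (P : Type u) (_ : AddCommGroup P) (_ : Module R P) (g : P →ₗ[R] M),
      Module.Projective R P ∧ Function.Surjective g ∧ pdLE R n ↥(LinearMap.ker g)

/-- The projective dimension (in `ℕ∞`, with `⊤` meaning infinite projective dimension)
of a left `R`-module `M`. -/
noncomputable def projDim (R : Type u) [Ring R] (M : Type u) [AddCommGroup M]
    [Module R M] : ℕ∞ :=
  sInf {d : ℕ∞ | ∃ n : ℕ, d = n ∧ pdLE R n M}

/-- The subgroup of `B ⊗_ℤ B` generated by the `A`-balancing relations; the quotient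
of `B ⊗_ℤ B` by this subgroup is the tensor product `B ⊗_A B` (for the right/left
`A`-module structures on `B` induced by `f : A →+* B`). -/
noncomputable def balancedRel {A B : Type*} [Ring A] [Ring B] (f : A →+* B) :
    AddSubgroup (TensorProduct ℤ B B) :=
  AddSubgroup.closure
    {x | ∃ (b : B) (a : A) (b' : B), x = (b * f a) ⊗ₜ[ℤ] b' - b ⊗ₜ[ℤ] (f a * b')}

/-- `B` is flat as a right `A`-module (via `f : A →+* B`), expressed by the standard
equational criterion for flatness (valid over arbitrary rings). -/
def RightFlat {A B : Type*} [Ring A] [Ring B] (f : A →+* B) : Prop :=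
  ∀ (n : ℕ) (x : Fin n → B) (a : Fin n → A), (∑ i, x i * f (a i)) = 0 →
    ∃ (k : ℕ) (y : Fin k → B) (c : Fin k → Fin n → A),
      (∀ i, x i = ∑ j, y j * f (c j i)) ∧ ∀ j, (∑ i, c j i * a i) = 0

/-- A ring extension `f : A →+* B` is *strictly separable* if
(1) the multiplication map `B ⊗_A B → B` is a split epimorphism of `B`-bimodules
    (equivalently, there is `w ∈ B ⊗_A B` with `μ(w) = 1` and `b·w = w·b` for all `b`;
    here elements of `B ⊗_A B` are represented by elements of `B ⊗_ℤ B` modulo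
    `balancedRel f`),
(2) the inclusion `A → B` is a split monomorphism of `A`-bimodules, and
(3) `B` is projective as a left `A`-module and flat as a right `A`-module. -/
def StrictlySeparable {A B : Type*} [Ring A] [Ring B] (f : A →+* B) : Prop :=
  (∃ w : TensorProduct ℤ B B, LinearMap.mul' ℤ B w = 1 ∧ ∀ b : B,
      TensorProduct.map (LinearMap.mulLeft ℤ b) (LinearMap.id : B →ₗ[ℤ] B) w -
        TensorProduct.map (LinearMap.id : B →ₗ[ℤ] B) (LinearMap.mulRight ℤ b) w
        ∈ balancedRel f) ∧
  (∃ π : B →+ A, (∀ a, π (f a) = a) ∧ (∀ (a : A) (b : B), π (f a * b) = a * π b) ∧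
      (∀ (a : A) (b : B), π (b * f a) = π b * a)) ∧
  (letI : Module A B := Module.compHom B f; Module.Projective A B) ∧
  RightFlat f

/-- The left global dimension of a ring `R`: the supremum of the projective dimensions
of all left `R`-modules. -/
noncomputable def leftGlobalDim (R : Type u) [Ring R] : ℕ∞ :=
  sSup {d : ℕ∞ | ∃ (M : Type u) (_ : AddCommGroup M) (_ : Module R M), d = projDim R M}

/-!
Restriction of scalars along `f : A →+* B` is exact, and it preserves projectives because `B` is
projective over `A`; so it does not increase projective dimension.

* If `π : B → A` splits `f` as a map of `A`-bimodules, then `m ↦ (b ↦ π b • m)` makes every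
  `A`-module `M` a direct summand of the restriction of the `B`-module `Hom_A(B, M)`. Hence
  `pd_A M ≤ pd_B Hom_A(B, M)`.
* If `∑ xᵢ ⊗ yᵢ` is a separability element, an `A`-linear lift `s` of a `B`-linear map can be
  averaged to the `B`-linear lift `n ↦ ∑ xᵢ • s (yᵢ • n)`. So a `B`-module that is projective over
  `A` is projective over `B`, and dimension shifting along a `B`-projective resolution gives
  `pd_B N ≤ pd_A N`.
-/

open CategoryTheory

section Functor

variable {C D : Type*} [Category C] [Category D] [Abelian C] [Abelian D]

theorem exists_shortExact_projective [EnoughProjectives C] (X : C) :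
    ∃ S : ShortComplex C, S.ShortExact ∧ Projective S.X₂ ∧ S.X₃ = X :=
  ⟨.mk _ _ (Limits.kernel.condition (Projective.π X)),
    { exact := ShortComplex.exact_kernel _ }, Projective.projective_over X, rfl⟩

variable [EnoughProjectives C] (F : C ⥤ D) [F.PreservesZeroMorphisms]
  [Limits.PreservesFiniteLimits F] [Limits.PreservesFiniteColimits F]
  [F.PreservesProjectiveObjects]

theorem hasProjectiveDimensionLE_obj (n : ℕ) (X : C) (hX : HasProjectiveDimensionLE X n) :
    HasProjectiveDimensionLE (F.obj X) n := by
  induction n generalizing X with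
  | zero =>
    rw [← projective_iff_hasProjectiveDimensionLE_zero] at hX ⊢
    exact F.projective_obj X
  | succ n ih =>
    obtain ⟨S, hS, hS₂, rfl⟩ := exists_shortExact_projective X
    have hFS : (S.map F).ShortExact := hS.map_of_exact F
    exact (hFS.hasProjectiveDimensionLT_X₃_iff n (F.projective_obj S.X₂)).2
      (ih S.X₁ ((hS.hasProjectiveDimensionLT_X₃_iff n hS₂).1 hX))

theorem hasProjectiveDimensionLE_of_obj
    (hF : ∀ X : C, Projective (F.obj X) → Projective X) (n : ℕ) (X : C)
    (hX : HasProjectiveDimensionLE (F.obj X) n) : HasProjectiveDimensionLE X n := by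
  induction n generalizing X with
  | zero =>
    rw [← projective_iff_hasProjectiveDimensionLE_zero] at hX ⊢
    exact hF X hX
  | succ n ih =>
    obtain ⟨S, hS, hS₂, rfl⟩ := exists_shortExact_projective X
    have hFS : (S.map F).ShortExact := hS.map_of_exact F
    exact (hS.hasProjectiveDimensionLT_X₃_iff n hS₂).2
      (ih S.X₁ ((hFS.hasProjectiveDimensionLT_X₃_iff n (F.projective_obj S.X₂)).1 hX))

end Functor

section GlobalDimension

theorem pdLE_iff_hasProjectiveDimensionLE {R : Type u} [Ring R] (n : ℕ) (M : Type u)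
    [AddCommGroup M] [Module R M] :
    pdLE R n M ↔ HasProjectiveDimensionLE (ModuleCat.of R M) n := by
  induction n generalizing M with
  | zero =>
    rw [← projective_iff_hasProjectiveDimensionLE_zero, ← IsProjective.iff_projective, pdLE]
  | succ n ih =>
    have pd_ker_iff {P : Type u} [AddCommGroup P] [Module R P] [Module.Projective R P]
        {g : P →ₗ[R] M} (hg : Function.Surjective g) :
        HasProjectiveDimensionLE (ModuleCat.of R M) (n + 1) ↔ pdLE R n (LinearMap.ker g) :=
      ((LinearMap.shortExact_shortComplexKer hg).hasProjectiveDimensionLT_X₃_iff n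
        ((IsProjective.iff_projective P).1 inferInstance)).trans (ih _).symm
    constructor
    · rintro ⟨P, _, _, g, _, hg, hker⟩
      exact (pd_ker_iff hg).2 hker
    · intro h
      have hfree := Finsupp.linearCombination_id_surjective R M
      exact ⟨M →₀ R, inferInstance, inferInstance, _, inferInstance, hfree, (pd_ker_iff hfree).1 h⟩

theorem leftGlobalDim_le_of_forall_exists {R S : Type u} [Ring R] [Ring S]
    (h : ∀ M : ModuleCat.{u} R, ∃ N : ModuleCat.{u} S, ∀ n : ℕ,
      HasProjectiveDimensionLE N n → HasProjectiveDimensionLE M n) :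
    leftGlobalDim R ≤ leftGlobalDim S := by
  refine sSup_le ?_
  rintro _ ⟨M, _, _, rfl⟩
  obtain ⟨N, hN⟩ := h (ModuleCat.of R M)
  have projDim_le : projDim R M ≤ projDim S N := by
    refine sInf_le_sInf ?_
    rintro _ ⟨n, rfl, hn⟩
    rw [pdLE_iff_hasProjectiveDimensionLE] at hn
    exact ⟨n, rfl, (pdLE_iff_hasProjectiveDimensionLE n M).2 (hN n hn)⟩
  exact projDim_le.trans (le_sSup ⟨N, inferInstance, inferInstance, rfl⟩)

end GlobalDimension

section Averaging

variable {B N P Q : Type*} [Ring B] [AddCommGroup N] [Module B N] [AddCommGroup P] [Module B P]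
  [AddCommGroup Q] [Module B Q]

/-- The `B`-bimodule action on additive maps `s : N → P`, evaluated at an element of `B ⊗ B`:
`∑ xᵢ ⊗ yᵢ` sends `s` to `n ↦ ∑ xᵢ • s (yᵢ • n)`. -/
def sandwich (s : N →ₗ[ℤ] P) : B ⊗[ℤ] B →ₗ[ℤ] N →ₗ[ℤ] P :=
  TensorProduct.lift <| LinearMap.mk₂ ℤ
    (fun x y ↦ Algebra.lsmul ℤ ℤ P x ∘ₗ s ∘ₗ Algebra.lsmul ℤ ℤ N y)
    (fun x x' y ↦ by ext; simp)
    (fun c x y ↦ by ext; simp)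
    (fun x y y' ↦ by ext; simp)
    (fun c x y ↦ by ext; simp [smul_comm x c])

@[simp]
theorem sandwich_tmul_apply (s : N →ₗ[ℤ] P) (x y : B) (n : N) :
    sandwich s (x ⊗ₜ[ℤ] y) n = x • s (y • n) :=
  rfl

theorem sandwich_map_mulLeft (s : N →ₗ[ℤ] P) (b : B) (z : B ⊗[ℤ] B) (n : N) :
    sandwich s (TensorProduct.map (LinearMap.mulLeft ℤ b) LinearMap.id z) n =
      b • sandwich s z n := by
  induction z with
  | zero => simp
  | tmul x y => simp [mul_smul]
  | add z z' hz hz' => simp [hz, hz']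

theorem sandwich_map_mulRight (s : N →ₗ[ℤ] P) (b : B) (z : B ⊗[ℤ] B) (n : N) :
    sandwich s (TensorProduct.map LinearMap.id (LinearMap.mulRight ℤ b) z) n =
      sandwich s z (b • n) := by
  induction z with
  | zero => simp
  | tmul x y => simp [mul_smul]
  | add z z' hz hz' => simp [hz, hz']

theorem apply_sandwich {s : N →ₗ[ℤ] P} {g : P →ₗ[B] Q} {φ : N →ₗ[B] Q}
    (hgs : ∀ n, g (s n) = φ n) (z : B ⊗[ℤ] B) (n : N) :
    g (sandwich s z n) = LinearMap.mul' ℤ B z • φ n := by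
  induction z with
  | zero => simp
  | tmul x y => simp [hgs, mul_smul]
  | add z z' hz hz' => simp [hz, hz', add_smul]

variable {A : Type*} [Ring A] {f : A →+* B}

theorem sandwich_eq_zero_of_mem_balancedRel {s : N →ₗ[ℤ] P}
    (hs : ∀ (a : A) (n : N), s (f a • n) = f a • s n) {z : B ⊗[ℤ] B} (hz : z ∈ balancedRel f) :
    sandwich s z = 0 := by
  suffices balancedRel f ≤ (sandwich s).toAddMonoidHom.ker from this hz
  refine (AddSubgroup.closure_le _).2 ?_
  rintro _ ⟨x, a, y, rfl⟩
  ext n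
  simp [mul_smul, hs]

/-- `w` represents a separability element of the ring extension `f : A →+* B`: its class in
`B ⊗_A B` is `B`-central and is mapped to `1` by the multiplication. -/
structure IsSeparabilityElement (f : A →+* B) (w : B ⊗[ℤ] B) : Prop where
  mul'_eq_one : LinearMap.mul' ℤ B w = 1
  central (b : B) :
    TensorProduct.map (LinearMap.mulLeft ℤ b) (LinearMap.id : B →ₗ[ℤ] B) w -
      TensorProduct.map (LinearMap.id : B →ₗ[ℤ] B) (LinearMap.mulRight ℤ b) w ∈ balancedRel f

theorem IsSeparabilityElement.sandwich_smul {w : B ⊗[ℤ] B} (hw : IsSeparabilityElement f w)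
    {s : N →ₗ[ℤ] P} (hs : ∀ (a : A) (n : N), s (f a • n) = f a • s n) (b : B) (n : N) :
    sandwich s w (b • n) = b • sandwich s w n := by
  rw [← sandwich_map_mulRight, ← sandwich_map_mulLeft, eq_comm, ← sub_eq_zero,
    ← LinearMap.sub_apply, ← map_sub, sandwich_eq_zero_of_mem_balancedRel hs (hw.central b),
    LinearMap.zero_apply]

theorem IsSeparabilityElement.exists_lift {w : B ⊗[ℤ] B} (hw : IsSeparabilityElement f w)
    {s : N →ₗ[ℤ] P} {g : P →ₗ[B] Q} {φ : N →ₗ[B] Q}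
    (hs : ∀ (a : A) (n : N), s (f a • n) = f a • s n) (hgs : ∀ n, g (s n) = φ n) :
    ∃ t : N →ₗ[B] P, ∀ n, g (t n) = φ n := by
  refine ⟨{ sandwich s w with map_smul' := hw.sandwich_smul hs }, fun n ↦ ?_⟩
  calc g (sandwich s w n) = LinearMap.mul' ℤ B w • φ n := apply_sandwich hgs w n
    _ = φ n := by rw [hw.mul'_eq_one, one_smul]

end Averaging

section RestrictScalars

universe v u₁ u₂

variable {A : Type u₁} {B : Type u₂} [Ring A] [Ring B] {f : A →+* B}

theorem projective_of_projective_restrictScalars {w : B ⊗[ℤ] B} (hw : IsSeparabilityElement f w)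
    (N : ModuleCat.{v} B) (hN : Projective ((ModuleCat.restrictScalars f).obj N)) :
    Projective N := by
  refine ⟨fun {P Q} φ g hg ↦ ?_⟩
  let F := ModuleCat.restrictScalars f
  have hFg : Epi (F.map g) := by rwa [ModuleCat.epi_iff_surjective] at hg ⊢
  obtain ⟨s, hs⟩ := hN.factors (F.map φ) (F.map g)
  obtain ⟨t, ht⟩ := hw.exists_lift (s := s.hom.toAddMonoidHom.toIntLinearMap) (g := g.hom)
    (φ := φ.hom) s.hom.map_smul (ConcreteCategory.congr_hom hs)
  exact ⟨ModuleCat.ofHom t, by ext n; exact ht n⟩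

theorem coextendScalars_preservesEpimorphisms
    (hB : Module.Projective A ((ModuleCat.restrictScalars f).obj (ModuleCat.of B B))) :
    (ModuleCat.coextendScalars.{u₁, u₂, v} f).PreservesEpimorphisms := by
  refine ⟨fun {M M'} g hg ↦ ?_⟩
  rw [ModuleCat.epi_iff_surjective] at hg ⊢
  intro φ
  obtain ⟨ψ, hψ⟩ := Module.projective_lifting_property g.hom
    (ModuleCat.CoextendScalars.equiv f M' φ) hg
  exact ⟨(ModuleCat.CoextendScalars.equiv f M).symm ψ, ModuleCat.CoextendScalars.ext hψ⟩

theorem restrictScalars_preservesProjectiveObjects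
    (hB : Module.Projective A ((ModuleCat.restrictScalars f).obj (ModuleCat.of B B))) :
    (ModuleCat.restrictScalars.{max v u₂} f).PreservesProjectiveObjects :=
  have := coextendScalars_preservesEpimorphisms.{max v u₂} hB
  Functor.preservesProjectiveObjects_of_adjunction_of_preservesEpimorphisms
    (ModuleCat.restrictCoextendScalarsAdj.{v} f)

instance restrictScalars_preservesFiniteLimits :
    Limits.PreservesFiniteLimits (ModuleCat.restrictScalars.{v} f) :=
  ⟨fun _ ↦ ⟨inferInstance⟩⟩

/-- A splitting of `f : A →+* B` as a map of `A`-bimodules. -/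
structure BimoduleRetraction (f : A →+* B) extends B →+ A where
  apply_map (a : A) : toFun (f a) = a
  map_mul_left (a : A) (b : B) : toFun (f a * b) = a * toFun b
  map_mul_right (a : A) (b : B) : toFun (b * f a) = toFun b * a

namespace BimoduleRetraction

variable (π : BimoduleRetraction f) (M : ModuleCat.{max v u₂} A)

/-- The embedding `m ↦ (b ↦ π b • m)` of an `A`-module `M` into `Hom_A(B, M)`. -/
noncomputable def toCoextendScalars :
    M ⟶ (ModuleCat.restrictScalars f).obj ((ModuleCat.coextendScalars f).obj M) :=
  ModuleCat.ofHom (Y := (ModuleCat.restrictScalars f).obj ((ModuleCat.coextendScalars f).obj M))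
    { toFun m := (ModuleCat.CoextendScalars.equiv f M).symm
        { toFun (b : B) := π.toAddMonoidHom b • m
          map_add' b b' := (congrArg (· • m) (π.map_add' b b')).trans (add_smul _ _ _)
          map_smul' a b := (congrArg (· • m) (π.map_mul_left a b)).trans (mul_smul _ _ _) }
      map_add' m m' := ModuleCat.CoextendScalars.ext <| LinearMap.ext fun _ ↦ smul_add _ m m'
      map_smul' a m := ModuleCat.CoextendScalars.ext <| LinearMap.ext fun (b : B) ↦
        ((congrArg (· • m) (π.map_mul_right a b)).trans (mul_smul _ _ _)).symm }

/-- The `A`-module `M` as a direct summand of `Hom_A(B, M)`, with evaluation at `1` as the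
retraction. -/
noncomputable def retractCoextendScalars :
    Retract M ((ModuleCat.restrictScalars f).obj ((ModuleCat.coextendScalars f).obj M)) where
  i := π.toCoextendScalars M
  r := (ModuleCat.restrictCoextendScalarsAdj.{v} f).counit.app M
  retract := by
    have π_one : π.toAddMonoidHom 1 = 1 := by simpa using π.apply_map 1
    ext m
    exact (congrArg (· • m) π_one).trans (one_smul A m)

end BimoduleRetraction

end RestrictScalars

section Extension

variable {A B : Type u} [Ring A] [Ring B] {f : A →+* B}

theorem leftGlobalDim_le_of_bimoduleRetraction (π : BimoduleRetraction f)
    (hB : Module.Projective A ((ModuleCat.restrictScalars f).obj (ModuleCat.of B B))) :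
    leftGlobalDim A ≤ leftGlobalDim B := by
  have := restrictScalars_preservesProjectiveObjects.{u} hB
  refine leftGlobalDim_le_of_forall_exists fun M ↦
    ⟨(ModuleCat.coextendScalars f).obj M, fun n hn ↦ ?_⟩
  have := hasProjectiveDimensionLE_obj (ModuleCat.restrictScalars f) n _ hn
  exact (π.retractCoextendScalars M).hasProjectiveDimensionLT (n + 1)

theorem leftGlobalDim_le_of_isSeparabilityElement {w : B ⊗[ℤ] B} (hw : IsSeparabilityElement f w)
    (hB : Module.Projective A ((ModuleCat.restrictScalars f).obj (ModuleCat.of B B))) :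
    leftGlobalDim B ≤ leftGlobalDim A := by
  have := restrictScalars_preservesProjectiveObjects.{u} hB
  exact leftGlobalDim_le_of_forall_exists fun N ↦ ⟨(ModuleCat.restrictScalars f).obj N,
    fun n ↦ hasProjectiveDimensionLE_of_obj _ (projective_of_projective_restrictScalars hw) n N⟩

theorem leftGlobalDim_eq_of_strictlySeparable_general {w : B ⊗[ℤ] B}
    (hw : IsSeparabilityElement f w) (π : BimoduleRetraction f)
    (hB : Module.Projective A ((ModuleCat.restrictScalars f).obj (ModuleCat.of B B))) :
    leftGlobalDim A = leftGlobalDim B :=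
  le_antisymm (leftGlobalDim_le_of_bimoduleRetraction π hB)
    (leftGlobalDim_le_of_isSeparabilityElement hw hB)

end Extension

/-- For a strictly separable ring extension `A ⊆ B`, the left global
dimensions of `A` and `B` are equal. -/
theorem leftGlobalDim_eq_of_strictlySeparable {A B : Type u} [Ring A] [Ring B]
    (f : A →+* B) (hsep : StrictlySeparable f) :
    leftGlobalDim A = leftGlobalDim B := by
  obtain ⟨⟨w, hw_mul, hw_central⟩, ⟨π, hπ, hπ_left, hπ_right⟩, hB, -⟩ := hsep
  exact leftGlobalDim_eq_of_strictlySeparable_general ⟨hw_mul, hw_central⟩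
    ⟨π, hπ, hπ_left, hπ_right⟩ hB
end

section
/- Let A be a ring and G a finite group acting on A via a datum (φ, ω), with |G| invertible in A. Then A is left hereditary if and only if the crossed product A[G,(φ,ω)] is left hereditary. -/
/-!
Statement 6: For a finite group `G` acting on a ring `A` via a datum `(φ, ω)` with
`|G|` invertible in `A`, the ring `A` is left hereditary if and only if the crossed
product `A[G, (φ, ω)]` is left hereditary.
-/

universe u v w

/-- An action of a group `G` on a ring `A` via a pair `(φ, ω)` consisting of a map
`φ : G → Aut(A)` and a normed two-cocycle `ω : G × G → Aˣ`, satisfying the usual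
compatibility conditions of a crossed system (Reiten–Riedtmann). -/
structure CrossedSystem (A : Type u) [Ring A] (G : Type v) [Group G] where
  /-- The action of `G` on `A` by ring automorphisms. -/
  φ : G → A ≃+* A
  /-- The system of factors (a normed two-cocycle with values in `Aˣ`). -/
  ω : G → G → Aˣ
  compat : ∀ (g₁ g₂ : G) (a : A),
    φ g₁ (φ g₂ a) = (ω g₁ g₂ : A) * φ (g₁ * g₂) a * ((ω g₁ g₂)⁻¹ : Aˣ)
  φ_one : φ 1 = RingEquiv.refl A
  ω_one_right : ∀ g : G, ω g 1 = 1
  ω_one_left : ∀ g : G, ω 1 g = 1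
  cocycle : ∀ g g' g'' : G,
    φ g (ω g' g'' : A) * (ω g (g' * g'') : A) = (ω g g' : A) * (ω (g * g') g'' : A)

/-- `IsCrossedProduct D B ι u` says that the ring `B`, together with the embedding
`ι : A →+* B` and the units `u g = [g]`, realizes the crossed product
`A[G, (φ, ω)]`: it is a free left `A`-module with basis `([g])_{g ∈ G}`, with
`[e] = 1`, `[g] · a = φ_g(a) · [g]` and `[f] · [g] = ω_{f,g} [f·g]`, which encodes
the multiplication rule `a[f] · b[g] = a φ_f(b) ω_{f,g} [fg]`. -/
structure IsCrossedProduct {A : Type u} [Ring A] {G : Type v} [Group G] [Fintype G]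
    (D : CrossedSystem A G) (B : Type w) [Ring B] (ι : A →+* B) (u : G → Bˣ) :
    Prop where
  u_one : (u 1 : B) = 1
  u_comm : ∀ (g : G) (a : A), (u g : B) * ι a = ι (D.φ g a) * u g
  u_mul : ∀ f g : G, (u f : B) * u g = ι (D.ω f g) * u (f * g)
  free : ∀ b : B, ∃! c : G → A, b = ∑ g : G, ι (c g) * u g

/-- A ring is left hereditary if every left ideal is projective. -/
def LeftHereditary (R : Type u) [Ring R] : Prop :=
  ∀ I : Ideal R, Module.Projective R ↥I

/-!
Write `B = A[G, (φ, ω)]`, a free left `A`-module of rank `|G|`.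

If `A` is left hereditary, then every submodule of a finitely generated projective `A`-module is
projective; in particular so is every left ideal of `B`, viewed as an `A`-module. Its projectivity
over `B` follows by Maschke's averaging trick: an `A`-linear section `s` of a `B`-linear surjection
is replaced by `|G|⁻¹ ∑ g, [g]⁻¹ ∘ s ∘ [g]`, which is `B`-linear because `[g] A = A [g]` and
`[g] [h] ∈ A [g h]`: right multiplication by `h` merely permutes the conjugates of `s`.

Conversely, the coefficient of `[e]` is an `A`-bimodule retraction `B → A`. It maps the left ideal
`B I` generated by a left ideal `I` of `A` onto `I`, so `I` is an `A`-linear direct summand of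
`B I`, which is projective over `B` and hence over `A`.
-/

section HereditaryModule

variable {R : Type*} [Ring R] {M N : Type*} [AddCommGroup M] [Module R M] [AddCommGroup N]
  [Module R N]

theorem projective_of_projective_ker_of_projective_range (f : M →ₗ[R] N)
    [Module.Projective R (LinearMap.ker f)] [Module.Projective R (LinearMap.range f)] :
    Module.Projective R M := by
  obtain ⟨s, hs⟩ := f.rangeRestrict.exists_rightInverse_of_surjective f.range_rangeRestrict
  refine .of_equiv' (lequivProdOfRightSplitExact (LinearMap.ker f).injective_subtype ?_ hs)
  rw [Submodule.range_subtype, LinearMap.ker_rangeRestrict]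

variable (R M) in
/-- A hereditary module, one all of whose submodules are projective. A ring is left hereditary
exactly when it is hereditary as a left module over itself. -/
def IsHereditaryModule : Prop :=
  ∀ P : Submodule R M, Module.Projective R P

namespace IsHereditaryModule

theorem projective_of_injective (hN : IsHereditaryModule R N) (f : M →ₗ[R] N)
    (hf : Function.Injective f) : Module.Projective R M :=
  have := hN (LinearMap.range f)
  .of_equiv' (LinearEquiv.ofInjective f hf).symm

theorem of_injective (hN : IsHereditaryModule R N) (f : M →ₗ[R] N) (hf : Function.Injective f) :
    IsHereditaryModule R M := fun P ↦
  hN.projective_of_injective (f ∘ₗ P.subtype) (hf.comp P.injective_subtype)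

theorem prod (hM : IsHereditaryModule R M) (hN : IsHereditaryModule R N) :
    IsHereditaryModule R (M × N) := by
  intro P
  let fst : P →ₗ[R] M := LinearMap.fst R M N ∘ₗ P.subtype
  let snd : P →ₗ[R] N := LinearMap.snd R M N ∘ₗ P.subtype
  have snd_injective_on_ker : Function.Injective (snd ∘ₗ (LinearMap.ker fst).subtype) :=
    fun x y hxy ↦ Subtype.ext <| Subtype.ext <| Prod.ext
      ((LinearMap.mem_ker.1 x.2).trans (LinearMap.mem_ker.1 y.2).symm) hxy
  have := hM (LinearMap.range fst)
  have := hN.projective_of_injective (M := LinearMap.ker fst) _ snd_injective_on_ker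
  exact projective_of_projective_ker_of_projective_range fst

theorem pi_fin (hM : IsHereditaryModule R M) (n : ℕ) : IsHereditaryModule R (Fin n → M) := by
  induction n with
  | zero => exact fun P ↦ inferInstance
  | succ n ih =>
    let e := Fin.consLinearEquiv R fun _ : Fin (n + 1) ↦ M
    exact (hM.prod ih).of_injective e.symm.toLinearMap e.symm.injective

end IsHereditaryModule

theorem LeftHereditary.isHereditaryModule (hR : LeftHereditary R) [Module.Finite R M]
    [Module.Projective R M] : IsHereditaryModule R M := by
  obtain ⟨n, -, f, -, hf, -⟩ := Module.Finite.exists_comp_eq_id_of_projective R M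
  have hRR : IsHereditaryModule R R := hR
  exact (hRR.pi_fin n).of_injective f hf

end HereditaryModule

section RestrictScalars

theorem projective_finsupp {R M : Type*} [Semiring R] [AddCommMonoid M] [Module R M]
    [Module.Projective R M] (ι : Type*) : Module.Projective R (ι →₀ M) := by
  classical exact .of_equiv' (finsuppLequivDFinsupp (ι := ι) (M := M) R).symm

theorem projective_restrictScalars (R S M : Type*) [Semiring R] [Semiring S] [AddCommMonoid M]
    [Module R S] [Module S M] [Module R M] [IsScalarTower R S S] [IsScalarTower R S M]
    [Module.Projective R S] [Module.Projective S M] : Module.Projective R M := by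
  obtain ⟨s, hs⟩ := Module.projective_def'.1 ‹Module.Projective S M›
  have := projective_finsupp (R := R) (M := S) M
  exact .of_split (s.restrictScalars R) ((Finsupp.linearCombination S id).restrictScalars R)
    (LinearMap.ext fun x ↦ LinearMap.congr_fun hs x)

variable {R S : Type*} [Ring R] [Ring S] [Module R S] [IsScalarTower R S S]

theorem apply_mem_of_mem_map_smulOneHom (ρ : S →ₗ[R] R)
    (hρ : ∀ (s : S) (r : R), ρ (s * r • 1) = ρ s * r) (I : Ideal R) {y : S}
    (hy : y ∈ I.map (RingHom.smulOneHom : R →+* S)) : ρ y ∈ I := by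
  induction hy using Submodule.closure_induction with
  | zero => simp only [map_zero, I.zero_mem]
  | add y z _ _ hy hz => simpa only [map_add] using I.add_mem hy hz
  | smul_mem s y hy =>
    obtain ⟨r, hr, rfl⟩ := hy
    rw [RingHom.smulOneHom_apply, smul_eq_mul, hρ]
    exact I.mul_mem_left _ hr

theorem LeftHereditary.of_bimodule_retraction [Module.Projective R S] (hS : LeftHereditary S)
    (ρ : S →ₗ[R] R) (hρ_one : ρ 1 = 1) (hρ : ∀ (s : S) (r : R), ρ (s * r • 1) = ρ s * r) :
    LeftHereditary R := by
  intro I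
  let J : Ideal S := I.map (RingHom.smulOneHom : R →+* S)
  have := hS J
  have : Module.Projective R J := projective_restrictScalars R S J
  let inclusion : I →ₗ[R] J :=
    ((LinearMap.toSpanSingleton R S 1).domRestrict I).codRestrict (J.restrictScalars R)
      fun x ↦ Ideal.mem_map_of_mem RingHom.smulOneHom x.2
  let retraction : J →ₗ[R] I :=
    (ρ.domRestrict (J.restrictScalars R)).codRestrict I
      fun y ↦ apply_mem_of_mem_map_smulOneHom ρ hρ I y.2
  refine .of_split inclusion retraction (LinearMap.ext fun x ↦ Subtype.ext ?_)
  calc ρ ((x : R) • 1) = x * ρ 1 := by rw [map_smul, smul_eq_mul]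
    _ = x := by rw [hρ_one, mul_one]

end RestrictScalars

theorem isUnit_natCast_moduleEnd {R S M : Type*} [Semiring R] [Semiring S] [AddCommMonoid M]
    [Module R M] [Module S M] {n : ℕ} (hn : IsUnit (n : R)) :
    IsUnit (n : Module.End S M) := by
  rw [Module.End.isUnit_iff]
  have hsmul := hn.smul_bijective (β := M)
  simp only [Nat.cast_smul_eq_nsmul] at hsmul
  exact hsmul

namespace IsCrossedProduct

variable {A : Type*} [Ring A] {G : Type*} [Group G] [Fintype G] {D : CrossedSystem A G}
  {B : Type*} [Ring B] [Module A B] [IsScalarTower A B B] {u : G → Bˣ}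

/-- The `A`-basis `([g])_{g ∈ G}` of the crossed product. Here, and in all that follows, the
embedding of `A` into `B` is `a ↦ a • 1` for a given left `A`-module structure on `B`. -/
noncomputable def basis (hB : IsCrossedProduct D B RingHom.smulOneHom u) : Module.Basis G A B :=
  .ofEquivFun <| .symm <| .ofBijective (Fintype.linearCombination A fun g ↦ (u g : B)) <| by
    rw [Function.bijective_iff_existsUnique]
    simpa only [RingHom.smulOneHom_apply, smul_one_mul, Fintype.linearCombination_apply, eq_comm]
      using hB.free

theorem basis_apply (hB : IsCrossedProduct D B RingHom.smulOneHom u) (g : G) :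
    hB.basis g = u g := by
  classical simp [basis, Fintype.linearCombination_apply, Pi.single_apply]

theorem coord_one_one (hB : IsCrossedProduct D B RingHom.smulOneHom u) :
    hB.basis.coord 1 1 = 1 := by
  rw [← hB.u_one, ← hB.basis_apply, Module.Basis.coord_apply, Module.Basis.repr_self,
    Finsupp.single_eq_same]

theorem u_mul_smul_one (hB : IsCrossedProduct D B RingHom.smulOneHom u) (g : G) (a : A) :
    (u g : B) * a • 1 = D.φ g a • (u g : B) := by
  simpa only [RingHom.smulOneHom_apply, smul_one_mul] using hB.u_comm g a

theorem coord_one_mul_smul_one (hB : IsCrossedProduct D B RingHom.smulOneHom u) (b : B) (a : A) :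
    hB.basis.coord 1 (b * a • 1) = hB.basis.coord 1 b * a := by
  let mulRight : B →ₗ[A] B := (LinearMap.toSpanSingleton B B (a • 1)).restrictScalars A
  suffices hB.basis.coord 1 ∘ₗ mulRight = LinearMap.toSpanSingleton A A a ∘ₗ hB.basis.coord 1 from
    LinearMap.congr_fun this b
  refine hB.basis.ext fun g ↦ ?_
  have mulRight_basis : mulRight (hB.basis g) = D.φ g a • hB.basis g := by
    rw [hB.basis_apply]
    exact hB.u_mul_smul_one g a
  rw [LinearMap.comp_apply, mulRight_basis, map_smul]
  rcases eq_or_ne g 1 with rfl | hg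
  · simp [D.φ_one]
  · simp [Finsupp.single_eq_of_ne' hg]

section Averaging

variable {M N : Type*} [AddCommMonoid M] [Module A M] [Module B M] [IsScalarTower A B M]
  [AddCommMonoid N] [Module A N] [Module B N] [IsScalarTower A B N]

theorem u_smul_smul (hB : IsCrossedProduct D B RingHom.smulOneHom u) (g : G) (a : A) (x : M) :
    u g • a • x = D.φ g a • u g • x := by
  calc u g • a • x = ((u g : B) * a • 1) • x := by
        rw [mul_smul, smul_assoc, one_smul, Units.smul_def]
    _ = D.φ g a • u g • x := by rw [hB.u_mul_smul_one, smul_assoc, Units.smul_def]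

theorem u_smul_u_smul (hB : IsCrossedProduct D B RingHom.smulOneHom u) (f g : G) (x : M) :
    u f • u g • x = (D.ω f g : A) • u (f * g) • x := by
  simp only [Units.smul_def]
  rw [smul_smul, hB.u_mul, RingHom.smulOneHom_apply, smul_one_mul, smul_assoc]

theorem map_smul_of_map_u_smul (hB : IsCrossedProduct D B RingHom.smulOneHom u) (f : M →ₗ[A] N)
    (hf : ∀ g x, f (u g • x) = u g • f x) (b : B) (x : M) : f (b • x) = b • f x := by
  simp only [Units.smul_def] at hf
  rw [← hB.basis.sum_repr b]
  simp only [Finset.sum_smul, map_sum, smul_assoc, map_smul, hB.basis_apply, hf]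

/-- The conjugate `[g]⁻¹ ∘ f ∘ [g]` of an `A`-linear map between modules over the crossed
product. -/
def conjugate (hB : IsCrossedProduct D B RingHom.smulOneHom u) (f : M →ₗ[A] N) (g : G) :
    M →ₗ[A] N where
  toFun x := (u g)⁻¹ • f (u g • x)
  map_add' x y := by simp only [smul_add, map_add]
  map_smul' a x := by
    rw [hB.u_smul_smul, map_smul, inv_smul_eq_iff, RingHom.id_apply, hB.u_smul_smul,
      smul_inv_smul]

theorem conjugate_apply (hB : IsCrossedProduct D B RingHom.smulOneHom u) (f : M →ₗ[A] N) (g : G)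
    (x : M) : hB.conjugate f g x = (u g)⁻¹ • f (u g • x) :=
  rfl

theorem conjugate_u_smul (hB : IsCrossedProduct D B RingHom.smulOneHom u) (f : M →ₗ[A] N)
    (g h : G) (x : M) : hB.conjugate f g (u h • x) = u h • hB.conjugate f (g * h) x := by
  rw [conjugate_apply, conjugate_apply, inv_smul_eq_iff, hB.u_smul_u_smul, hB.u_smul_u_smul,
    map_smul, smul_inv_smul]

/-- The sum of the conjugates `[g]⁻¹ ∘ f ∘ [g]` over all `g ∈ G`, which is linear over the crossed
product. -/
def sumOfConjugates (hB : IsCrossedProduct D B RingHom.smulOneHom u) (f : M →ₗ[A] N) :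
    M →ₗ[B] N where
  __ := ∑ g, hB.conjugate f g
  map_smul' := hB.map_smul_of_map_u_smul (∑ g, hB.conjugate f g) fun h x ↦ by
    simp only [LinearMap.sum_apply, hB.conjugate_u_smul, Finset.smul_sum]
    exact Fintype.sum_equiv (Equiv.mulRight h) _ _ fun _ ↦ rfl

theorem sumOfConjugates_apply (hB : IsCrossedProduct D B RingHom.smulOneHom u) (f : M →ₗ[A] N)
    (x : M) : hB.sumOfConjugates f x = ∑ g, (u g)⁻¹ • f (u g • x) :=
  LinearMap.sum_apply _ _ _

theorem comp_sumOfConjugates_of_rightInverse (hB : IsCrossedProduct D B RingHom.smulOneHom u)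
    (p : N →ₗ[B] M) (s : M →ₗ[A] N) (hs : Function.RightInverse s p) :
    p ∘ₗ hB.sumOfConjugates s = (Fintype.card G : Module.End B M) := by
  ext x
  have map_conjugate (g : G) : p ((u g)⁻¹ • s (u g • x)) = x := by
    rw [Units.smul_def, map_smul, hs, ← Units.smul_def, inv_smul_smul]
  simp only [LinearMap.comp_apply, sumOfConjugates_apply, map_sum, map_conjugate,
    Finset.sum_const, Finset.card_univ, Module.End.natCast_apply]

theorem projective_of_projective_restrictScalars
    (hB : IsCrossedProduct D B RingHom.smulOneHom u) (hG : IsUnit (Fintype.card G : A))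
    [Module.Projective A M] : Module.Projective B M := by
  let p : (M →₀ B) →ₗ[B] M := Finsupp.linearCombination B id
  obtain ⟨s, hs⟩ := Module.projective_lifting_property (p.restrictScalars A) LinearMap.id
    (Finsupp.linearCombination_id_surjective B M)
  obtain ⟨c, hc⟩ : IsUnit (Fintype.card G : Module.End B M) := isUnit_natCast_moduleEnd hG
  refine .of_split (hB.sumOfConjugates s ∘ₗ (c⁻¹ : (Module.End B M)ˣ).val) p ?_
  rw [← LinearMap.comp_assoc,
    hB.comp_sumOfConjugates_of_rightInverse p s (LinearMap.congr_fun hs), ← hc]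
  exact c.mul_inv

end Averaging

theorem leftHereditary_of_base (hB : IsCrossedProduct D B RingHom.smulOneHom u)
    (hG : IsUnit (Fintype.card G : A)) (hA : LeftHereditary A) : LeftHereditary B := by
  intro I
  have := Module.Finite.of_basis hB.basis
  have := Module.Projective.of_basis hB.basis
  have : Module.Projective A I := hA.isHereditaryModule.projective_of_injective
    (I.subtype.restrictScalars A) I.injective_subtype
  exact hB.projective_of_projective_restrictScalars hG

theorem leftHereditary_base (hB : IsCrossedProduct D B RingHom.smulOneHom u)
    (h : LeftHereditary B) : LeftHereditary A :=
  have := Module.Projective.of_basis hB.basis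
  h.of_bimodule_retraction (hB.basis.coord 1) hB.coord_one_one hB.coord_one_mul_smul_one

end IsCrossedProduct

/-- Let `G` be a finite group acting on the ring `A` via the datum
`(φ, ω)`, with `|G|` invertible in `A`.  Then `A` is left hereditary if and only if
the crossed product `A[G, (φ, ω)]` is left hereditary. -/
theorem leftHereditary_iff_leftHereditary_crossedProduct
    {A : Type u} [Ring A] {G : Type v} [Group G] [Fintype G]
    (D : CrossedSystem A G) (B : Type w) [Ring B] (ι : A →+* B) (u : G → Bˣ)
    (hB : IsCrossedProduct D B ι u) (hn : IsUnit ((Fintype.card G : ℕ) : A)) :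
    LeftHereditary A ↔ LeftHereditary B := by
  let : Module A B := ι.toModule
  have : IsScalarTower A B B := ⟨fun a b c ↦ mul_assoc (ι a) b c⟩
  have hι : ι = RingHom.smulOneHom := RingHom.ext fun a ↦ (mul_one (ι a)).symm
  rw [hι] at hB
  exact ⟨hB.leftHereditary_of_base hn, hB.leftHereditary_base⟩
end
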